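/- Let P be a finite poset and r \ge 2 an integer, and let P_r = P \times Q_{r-1} with the product order, where Q_{r-1} = {1, ..., r-1} is a chain. Then for all x \in P and 1 \le i \le r-1: height_{\hat{P_r}}((x,i)) = height_{\hat{P}}(x) + i - 1 and depth_{\hat{P_r}}((x,i)) = depth_{\hat{P}}(x) + (r - i - 1); in particular rank \hat{P_r} = rank \hat{P} + (r - 2). Consequently, height(x) + depth(x) = rank \hat{P} for all x \in P if and only if height((x,i)) + depth((x,i)) = rank \hat{P_r} for all (x,i) \in P_r; that is, the generalized Hibi ring R_r(P) is pseudo-Gorenstein if and only if the Hibi ring R[I(P)] is pseudo-Gorenstein. -/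

import Mathlib

open Classical

/-- `Hat P` is the poset `P` with a new least element `-∞ = ⊥` and a new
greatest element `∞ = ⊤` adjoined. -/
abbrev Hat (P : Type*) := WithBot (WithTop P)

/-- The canonical inclusion of `P` into `Hat P`. -/
def toHat {P : Type*} (x : P) : Hat P := ((x : WithTop P) : WithBot (WithTop P))

/-- The rank of a poset: the maximal length (number of covering steps) of a
chain, encoded as the maximal `n` admitting a strictly increasing sequence of
`n + 1` elements. -/
noncomputable def rankN (Q : Type*) [Preorder Q] : ℕ :=
  sSup {n : ℕ | ∃ f : Fin (n + 1) → Q, StrictMono f}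

/-- The height of `x` in a poset `Q`: the rank of the subposet `{y | y ≤ x}`. -/
noncomputable def heightN {Q : Type*} [Preorder Q] (x : Q) : ℕ :=
  sSup {n : ℕ | ∃ f : Fin (n + 1) → Q, StrictMono f ∧ ∀ i, f i ≤ x}

/-- The depth of `x` in a poset `Q`: the rank of the subposet `{y | x ≤ y}`. -/
noncomputable def depthN {Q : Type*} [Preorder Q] (x : Q) : ℕ :=
  sSup {n : ℕ | ∃ f : Fin (n + 1) → Q, StrictMono f ∧ ∀ i, x ≤ f i}

/-- `v` belongs to `S(P)`: `v : Hat P → ℕ` is order-reversing with `v ∞ = 0`. -/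
def memS (P : Type*) [PartialOrder P] (v : Hat P → ℕ) : Prop :=
  v ⊤ = 0 ∧ ∀ p q : Hat P, p ≤ q → v q ≤ v p

/-- `v` belongs to `T(P)`: `v : Hat P → ℕ` is strictly order-reversing with
`v ∞ = 0`. -/
def memT (P : Type*) [PartialOrder P] (v : Hat P → ℕ) : Prop :=
  v ⊤ = 0 ∧ ∀ p q : Hat P, p < q → v q < v p

/-- The partial order of `T(P)`: `v ≥ w` iff `v` dominates `w` pointwise and the
pointwise difference `v - w` is order-reversing. -/
def Tge (P : Type*) [PartialOrder P] (v w : Hat P → ℕ) : Prop :=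
  (∀ p : Hat P, w p ≤ v p) ∧ ∀ p q : Hat P, p ≤ q → v q - w q ≤ v p - w p

/-- `v` is a minimal element of the poset `T(P)`. -/
def IsMinT (P : Type*) [PartialOrder P] (v : Hat P → ℕ) : Prop :=
  memT P v ∧ ∀ w : Hat P → ℕ, memT P w → Tge P v w → w = v

/-- A poset is pure if all its maximal chains have the same length, equivalently
the same cardinality. -/
def IsPure (P : Type*) [PartialOrder P] : Prop :=
  ∀ C D : Set P, IsMaxChain (· ≤ ·) C → IsMaxChain (· ≤ ·) D → C.ncard = D.ncard

/-!
In the `ℕ∞`-valued setting of `Order.height`, height and coheight are additive on products: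
`height z.1 + height z.2` grows by at least one along every strict step, which bounds the height
of `(a, b)` from above, and a chain ending at `a` in the first factor can be continued by a chain
ending at `b` in the second. Adjoining `-∞` and `∞` raises heights and coheights of the original
elements by one and the Krull dimension by two, so additivity survives with one factor hatted.
For a chain with `n` elements, `height i + coheight i = n - 1` for every `i`, so the second factor
contributes the same amount to `height + depth` as to the rank.
-/

section OrderHeight

-- Under `open Classical`, `open Order` would also open `Classical.Order` and its `LT` instance.
open _root_.Order

variable {α β : Type*} [Preorder α] [Preorder β]

theorem height_lt_top [FiniteDimensionalOrder α] (a : α) : height a < ⊤ :=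
  WithBot.coe_lt_coe.mp <| (height_le_krullDim a).trans_lt <|
    lt_top_iff_ne_top.mpr krullDim_ne_top_of_finiteDimensionalOrder

theorem finiteDimensionalOrder_of_krullDim_eq_natCast {n : ℕ} (h : krullDim α = n) :
    FiniteDimensionalOrder α := by
  rw [finiteDimensionalOrder_iff_krullDim_ne_bot_and_top, h]
  exact ⟨WithBot.natCast_ne_bot n, (WithBot.coe_lt_coe.mpr (ENat.natCast_lt_top n)).ne⟩

instance finiteDimensionalOrder_of_finite [Finite α] [Nonempty α] : FiniteDimensionalOrder α := by
  have := Fintype.ofFinite α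
  refine not_infiniteDimensionalOrder_iff.mp fun _ ↦ ?_
  simpa using (LTSeries.withLength α (Fintype.card α)).length_lt_card

theorem height_le_of_lt_imp_add_one_le {f : α → ℕ∞} (hf : ∀ ⦃x y : α⦄, x < y → f x + 1 ≤ f y)
    (a : α) : height a ≤ f a := by
  refine height_le fun p hp ↦ ?_
  induction p using RelSeries.inductionOn' generalizing a with
  | singleton x => simp
  | snoc p x hx ih =>
    obtain rfl : x = a := by simpa using hp
    calc ((p.snoc x hx).length : ℕ∞) = p.length + 1 := by simp
      _ ≤ f p.last + 1 := by gcongr; exact ih _ rfl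
      _ ≤ f x := hf hx

theorem height_head_add_length_le (p : LTSeries α) : height p.head + p.length ≤ height p.last := by
  induction p using RelSeries.inductionOn' with
  | singleton x => simp
  | snoc p x hx ih =>
    calc height (p.snoc x hx).head + (p.snoc x hx).length
        = height p.head + p.length + 1 := by simp [add_assoc]
      _ ≤ height p.last + 1 := by gcongr
      _ ≤ height (p.snoc x hx).last := by simpa using height_add_one_le hx

theorem height_prodMk_le (a : α) (b : β) : height (a, b) ≤ height a + height b := by
  refine height_le_of_lt_imp_add_one_le (f := fun z : α × β ↦ height z.1 + height z.2) ?_ (a, b)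
  intro z w hzw
  rcases Prod.lt_iff.mp hzw with ⟨h_fst, h_snd⟩ | ⟨h_fst, h_snd⟩
  · rw [add_right_comm]
    exact add_le_add (height_add_one_le h_fst) (height_mono h_snd)
  · rw [add_assoc]
    exact add_le_add (height_mono h_fst) (height_add_one_le h_snd)

theorem height_add_le_height_prodMk (a : α) (b : β) : height a + height b ≤ height (a, b) := by
  have mk_left_strictMono (d : β) : StrictMono fun c : α ↦ (c, d) :=
    fun _ _ h ↦ Prod.mk_lt_mk_iff_left.mpr h
  have mk_right_strictMono : StrictMono fun d : β ↦ (a, d) :=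
    fun _ _ h ↦ Prod.mk_lt_mk_iff_right.mpr h
  have exists_last_eq : ∃ q : LTSeries β, q.last = b := ⟨RelSeries.singleton _ b, rfl⟩
  rw [height_eq_iSup_last_eq b, ENat.add_biSup' exists_last_eq]
  refine iSup₂_le ?_
  rintro q rfl
  calc height a + q.length
      ≤ height (a, q.head) + q.length := by
        gcongr
        exact height_le_height_apply_of_strictMono _ (mk_left_strictMono q.head) a
    _ ≤ height (a, q.last) := by
        simpa using height_head_add_length_le (q.map _ mk_right_strictMono)

theorem height_prodMk (a : α) (b : β) : height (a, b) = height a + height b :=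
  (height_prodMk_le a b).antisymm (height_add_le_height_prodMk a b)

theorem coheight_prodMk (a : α) (b : β) : coheight (a, b) = coheight a + coheight b :=
  height_prodMk (OrderDual.toDual a) (OrderDual.toDual b)

theorem krullDim_prod : krullDim (α × β) = krullDim α + krullDim β := by
  cases isEmpty_or_nonempty α
  · simp [krullDim_eq_bot]
  cases isEmpty_or_nonempty β
  · simp [krullDim_eq_bot]
  simp only [krullDim_eq_iSup_height_of_nonempty, ← WithBot.coe_add, iSup_prod, height_prodMk,
    ← ENat.add_iSup, ← ENat.iSup_add]

theorem height_fin {n : ℕ} (i : Fin n) : height i = (i : ℕ) := by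
  rw [← height_nat]
  refine height_eq_of_strictMono Fin.val (fun _ _ h ↦ h) (fun a b h ↦ ?_) i
  exact ⟨⟨b, h.trans a.isLt⟩, h, rfl⟩

theorem coheight_fin {n : ℕ} (i : Fin n) : coheight i = (n - (i + 1) : ℕ) := by
  rw [← height_toDual, ← height_orderIso Fin.revOrderIso, height_fin]
  simp only [Fin.revOrderIso_apply, OrderDual.ofDual_toDual, Fin.val_rev]

theorem krullDim_fin (n : ℕ) [NeZero n] : krullDim (Fin n) = (n - 1 : ℕ) := by
  rw [← height_top_eq_krullDim, height_fin, Fin.val_top]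
  rfl

theorem height_toHat (a : α) : height (toHat a) = height a + 1 := by
  simp [toHat]

theorem coheight_toHat (a : α) : coheight (toHat a) = coheight a + 1 := by
  simp [toHat]

theorem krullDim_hat [Nonempty α] : krullDim (Hat α) = krullDim α + 2 := by
  simp [add_assoc, one_add_one_eq_two]

end OrderHeight

section NatHeight

open _root_.Order

variable {α β : Type*} [Preorder α] [Preorder β]

theorem natCast_le_height_iff {a : α} {n : ℕ} :
    (n : ℕ∞) ≤ height a ↔ ∃ f : Fin (n + 1) → α, StrictMono f ∧ ∀ i, f i ≤ a := by
  constructor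
  · intro h
    obtain ⟨p, rfl, rfl⟩ := exists_series_of_le_height a h
    exact ⟨p, p.strictMono, fun i ↦ p.monotone (Fin.le_last i)⟩
  · rintro ⟨f, hf, hfa⟩
    exact length_le_height (p := LTSeries.mk n f hf) (hfa (Fin.last n))

theorem natCast_le_coheight_iff {a : α} {n : ℕ} :
    (n : ℕ∞) ≤ coheight a ↔ ∃ f : Fin (n + 1) → α, StrictMono f ∧ ∀ i, a ≤ f i := by
  constructor
  · intro h
    obtain ⟨p, rfl, rfl⟩ := exists_series_of_le_coheight a h
    exact ⟨p, p.strictMono, fun i ↦ p.monotone (Fin.zero_le i)⟩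
  · rintro ⟨f, hf, hfa⟩
    exact length_le_coheight (p := LTSeries.mk n f hf) (hfa 0)

theorem natCast_le_krullDim_iff {n : ℕ} :
    (n : WithBot ℕ∞) ≤ krullDim α ↔ ∃ f : Fin (n + 1) → α, StrictMono f := by
  rw [le_krullDim_iff]
  constructor
  · rintro ⟨p, rfl⟩
    exact ⟨p, p.strictMono⟩
  · rintro ⟨f, hf⟩
    exact ⟨LTSeries.mk n f hf, rfl⟩

theorem natCast_heightN [FiniteDimensionalOrder α] (a : α) : (heightN a : ℕ∞) = height a := by
  obtain ⟨n, hn⟩ := ENat.ne_top_iff_exists.mp (height_lt_top a).ne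
  simp only [heightN, ← natCast_le_height_iff, ← hn, Nat.cast_le]
  exact congrArg _ csSup_Iic

theorem natCast_depthN [FiniteDimensionalOrder α] (a : α) : (depthN a : ℕ∞) = coheight a := by
  obtain ⟨n, hn⟩ := ENat.ne_top_iff_exists.mp (coheight_lt_top a).ne
  simp only [depthN, ← natCast_le_coheight_iff, ← hn, Nat.cast_le]
  exact congrArg _ csSup_Iic

theorem natCast_rankN [FiniteDimensionalOrder α] : (rankN α : WithBot ℕ∞) = krullDim α := by
  have krullDim_eq := krullDim_eq_length_of_finiteDimensionalOrder (α := α)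
  simp only [rankN, ← natCast_le_krullDim_iff, krullDim_eq, Nat.cast_le]
  exact congrArg _ csSup_Iic

instance finiteDimensionalOrder_prod [FiniteDimensionalOrder α] [FiniteDimensionalOrder β] :
    FiniteDimensionalOrder (α × β) :=
  finiteDimensionalOrder_of_krullDim_eq_natCast (n := rankN α + rankN β) <| by
    rw [krullDim_prod, Nat.cast_add, natCast_rankN, natCast_rankN]

instance finiteDimensionalOrder_hat [FiniteDimensionalOrder α] : FiniteDimensionalOrder (Hat α) :=
  have := LTSeries.nonempty_of_finiteDimensionalOrder α
  finiteDimensionalOrder_of_krullDim_eq_natCast (n := rankN α + 2) <| by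
    rw [krullDim_hat, Nat.cast_add, natCast_rankN, Nat.cast_ofNat]

theorem heightN_toHat_prodMk [FiniteDimensionalOrder α] [FiniteDimensionalOrder β] (a : α) (b : β) :
    heightN (toHat (a, b)) = heightN (toHat a) + heightN b := by
  rw [← Nat.cast_inj (R := ℕ∞), Nat.cast_add]
  simp only [natCast_heightN, height_toHat, height_prodMk, add_right_comm]

theorem depthN_toHat_prodMk [FiniteDimensionalOrder α] [FiniteDimensionalOrder β] (a : α) (b : β) :
    depthN (toHat (a, b)) = depthN (toHat a) + depthN b := by
  rw [← Nat.cast_inj (R := ℕ∞), Nat.cast_add]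
  simp only [natCast_depthN, coheight_toHat, coheight_prodMk, add_right_comm]

theorem rankN_hat_prod [FiniteDimensionalOrder α] [FiniteDimensionalOrder β] :
    rankN (Hat (α × β)) = rankN (Hat α) + rankN β := by
  have := LTSeries.nonempty_of_finiteDimensionalOrder α
  have := LTSeries.nonempty_of_finiteDimensionalOrder β
  rw [← Nat.cast_inj (R := WithBot ℕ∞), Nat.cast_add]
  simp only [natCast_rankN, krullDim_hat, krullDim_prod, add_right_comm]

theorem heightN_fin {n : ℕ} (i : Fin n) : heightN i = i := by
  have : Nonempty (Fin n) := ⟨i⟩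
  rw [← Nat.cast_inj (R := ℕ∞), natCast_heightN, height_fin]

theorem depthN_fin {n : ℕ} (i : Fin n) : depthN i = n - (i + 1) := by
  have : Nonempty (Fin n) := ⟨i⟩
  rw [← Nat.cast_inj (R := ℕ∞), natCast_depthN, coheight_fin]

theorem rankN_fin (n : ℕ) [NeZero n] : rankN (Fin n) = n - 1 := by
  rw [← Nat.cast_inj (R := WithBot ℕ∞), natCast_rankN, krullDim_fin]

end NatHeight

theorem height_depth_prod_chain_general (P : Type*) [Preorder P] [FiniteDimensionalOrder P]
    (r : ℕ) (hr : 2 ≤ r) :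
    (∀ (x : P) (i : Fin (r - 1)),
        heightN (toHat ((x, i) : P × Fin (r - 1))) = heightN (toHat x) + (i : ℕ) ∧
        depthN (toHat ((x, i) : P × Fin (r - 1))) =
          depthN (toHat x) + (r - 2 - (i : ℕ))) ∧
      rankN (Hat (P × Fin (r - 1))) = rankN (Hat P) + (r - 2) ∧
      ((∀ x : P, heightN (toHat x) + depthN (toHat x) = rankN (Hat P)) ↔
        ∀ z : P × Fin (r - 1),
          heightN (toHat z) + depthN (toHat z) = rankN (Hat (P × Fin (r - 1)))) := by
  have : NeZero (r - 1) := ⟨by omega⟩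
  have height_eq (x : P) (i : Fin (r - 1)) :
      heightN (toHat (x, i)) = heightN (toHat x) + (i : ℕ) := by
    rw [heightN_toHat_prodMk, heightN_fin]
  have depth_eq (x : P) (i : Fin (r - 1)) :
      depthN (toHat (x, i)) = depthN (toHat x) + (r - 2 - (i : ℕ)) := by
    rw [depthN_toHat_prodMk, depthN_fin]
    omega
  have rank_eq : rankN (Hat (P × Fin (r - 1))) = rankN (Hat P) + (r - 2) := by
    rw [rankN_hat_prod, rankN_fin, Nat.sub_sub]
  have sum_eq_rank_iff (x : P) (i : Fin (r - 1)) :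
      heightN (toHat (x, i)) + depthN (toHat (x, i)) = rankN (Hat (P × Fin (r - 1))) ↔
        heightN (toHat x) + depthN (toHat x) = rankN (Hat P) := by
    rw [height_eq, depth_eq, rank_eq]
    omega
  exact ⟨fun x i ↦ ⟨height_eq x i, depth_eq x i⟩, rank_eq,
    by simp only [Prod.forall, sum_eq_rank_iff, forall_const]⟩

/-- Heights and depths in `Hat (P × Q_{r-1})`, where `Q_{r-1}` is realized as
`Fin (r-1)` (so the 0-based index `i` corresponds to the paper's `i + 1`):
`height((x,i)) = height(x) + i`, `depth((x,i)) = depth(x) + (r - 2 - i)`, hence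
`rank (Hat (P × Q_{r-1})) = rank (Hat P) + (r - 2)`; consequently the Hibi ring
of `I(P × Q_{r-1})` (the generalized Hibi ring `R_r(P)`) is pseudo-Gorenstein
iff the Hibi ring of `I(P)` is. -/
theorem height_depth_prod_chain (P : Type*) [Fintype P] [PartialOrder P]
    [Nonempty P] (r : ℕ) (hr : 2 ≤ r) :
    (∀ (x : P) (i : Fin (r - 1)),
        heightN (toHat ((x, i) : P × Fin (r - 1))) = heightN (toHat x) + (i : ℕ) ∧
        depthN (toHat ((x, i) : P × Fin (r - 1))) =
          depthN (toHat x) + (r - 2 - (i : ℕ))) ∧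
      rankN (Hat (P × Fin (r - 1))) = rankN (Hat P) + (r - 2) ∧
      ((∀ x : P, heightN (toHat x) + depthN (toHat x) = rankN (Hat P)) ↔
        ∀ z : P × Fin (r - 1),
          heightN (toHat z) + depthN (toHat z) = rankN (Hat (P × Fin (r - 1)))) :=
  height_depth_prod_chain_general P r hr
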